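/- There exist a Borel probability measure μ on ℝ with μ(ℝ \ 𝕃) = 0 and constants C > 0, M > e^e such that |μ̂(ξ)| ≤ C·|ξ|^(−1/log log |ξ|) for all ξ ∈ ℝ with |ξ| ≥ M. -/

import Mathlib

open MeasureTheory Filter Set

/-- The Fourier transform of a measure on `ℝ`: `μ̂(ξ) = ∫ e^(−2πiξx) dμ(x)`. -/
noncomputable def fourierT (μ : Measure ℝ) (ξ : ℝ) : ℂ :=
  ∫ x, Complex.exp (((-2 * Real.pi * ξ * x : ℝ) : ℂ) * Complex.I) ∂μ

lemma geo_bound (p : ℕ) (hp : 0 < p) (t D : ℝ) (hD : 0 < D) (h : ∀ m : ℤ, D ≤ |t - m * p|) :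
    ‖∑ a ∈ Finset.Icc 1 p, Complex.exp (((-2 * Real.pi * t * ((a : ℝ) / p) : ℝ) : ℂ) * Complex.I)‖
      ≤ p / D := by
  have hp' : (0 : ℝ) < p := by exact_mod_cast hp
  set y : ℝ := t / p with hy
  set z : ℂ := Complex.exp (Complex.I * ((-2 * Real.pi * y : ℝ) : ℂ)) with hz
  have hz1 : ‖z‖ = 1 := Complex.norm_exp_I_mul_ofReal _
  have hsum : ∑ a ∈ Finset.Icc 1 p,
      Complex.exp (((-2 * Real.pi * t * ((a : ℝ) / p) : ℝ) : ℂ) * Complex.I)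
      = z * ∑ a ∈ Finset.range p, z ^ a := by
    rw [Finset.mul_sum, Finset.range_eq_Ico,
      ← Finset.sum_Ico_add_right_sub_eq (f := fun a => z * z ^ a) 0 p 1]
    apply Finset.sum_congr
    · ext; simp
    · intro a ha
      have h1 : 1 ≤ a := by simp at ha; omega
      rw [← pow_succ', show a - 1 + 1 = a by omega, hz, ← Complex.exp_nat_mul]
      congr 1
      push_cast [hy]
      ring
  have hlow : 4 * (D / p) ≤ ‖z - 1‖ := by
    rw [hz, Complex.norm_exp_I_mul_ofReal_sub_one, norm_mul, Real.norm_eq_abs, Real.norm_eq_abs]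
    have e1 : |Real.sin (-2 * Real.pi * y / 2)| = |Real.sin (Real.pi * (y - round y))| := by
      rw [show -2 * Real.pi * y / 2 = -(Real.pi * y) by ring, Real.sin_neg, abs_neg,
        show Real.pi * (y - round y) = Real.pi * y - (round y : ℤ) * Real.pi by ring]
      rw [Real.sin_sub_int_mul_pi, abs_mul]
      simp
    rw [e1]
    have h2 : |y - round y| ≤ 1 / 2 := abs_sub_round y
    have h3 := Real.mul_abs_le_abs_sin (x := Real.pi * (y - round y)) (by
      rw [abs_mul, abs_of_pos Real.pi_pos]; nlinarith [Real.pi_pos])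
    rw [abs_mul, abs_of_pos Real.pi_pos] at h3
    have h4 : 2 / Real.pi * (Real.pi * |y - round y|) = 2 * |y - round y| := by
      field_simp
    have h5 : D / p ≤ |y - round y| := by
      rw [div_le_iff₀ hp']
      have := h (round y)
      have e : t - round y * p = (y - round y) * p := by
        rw [hy]; field_simp
      rw [e, abs_mul, abs_of_pos hp'] at this
      exact this
    rw [abs_of_pos (by norm_num : (0:ℝ) < 2)]
    linarith
  rw [hsum, norm_mul, hz1, one_mul]
  have hg : (∑ a ∈ Finset.range p, z ^ a) * (z - 1) = z ^ p - 1 := geom_sum_mul z p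
  have hn : ‖∑ a ∈ Finset.range p, z ^ a‖ * ‖z - 1‖ ≤ 2 := by
    rw [← norm_mul, hg]
    calc ‖z ^ p - 1‖ ≤ ‖z ^ p‖ + ‖(1 : ℂ)‖ := norm_sub_le _ _
      _ = 2 := by rw [norm_pow, hz1]; norm_num
  have h6 : ‖∑ a ∈ Finset.range p, z ^ a‖ * (4 * (D / p)) ≤ 2 :=
    le_trans (mul_le_mul_of_nonneg_left hlow (norm_nonneg _)) hn
  rw [le_div_iff₀ hD]
  have h7 : ‖∑ a ∈ Finset.range p, z ^ a‖ * (4 * (D / p)) * p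
    = 4 * (‖∑ a ∈ Finset.range p, z ^ a‖ * D) := by field_simp
  have h8 := mul_le_mul_of_nonneg_right h6 hp'.le
  nlinarith

lemma exists_nu (S : Finset ℕ) (hS : S.Nonempty) (h2 : ∀ p ∈ S, 2 ≤ p) :
    ∃ ν : Measure ℝ, IsProbabilityMeasure ν ∧
      (∀ᵐ x ∂ν, ∃ p ∈ S, ∃ a : ℕ, 1 ≤ a ∧ a ≤ p ∧ x = (a : ℝ) / p) ∧
      ∀ t : ℝ, fourierT ν t = (1 / (S.card : ℂ)) * ∑ p ∈ S, (1 / (p : ℂ)) *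
        ∑ a ∈ Finset.Icc 1 p,
          Complex.exp (((-2 * Real.pi * t * ((a : ℝ) / p) : ℝ) : ℂ) * Complex.I) := by
  have hc : (S.card : ENNReal) ≠ 0 := by
    simpa using hS.ne_empty
  refine ⟨(S.card : ENNReal)⁻¹ • ∑ p ∈ S, (p : ENNReal)⁻¹ • ∑ a ∈ Finset.Icc 1 p,
    Measure.dirac ((a : ℝ) / p), ⟨?_⟩, ?_, ?_⟩
  · simp only [Measure.smul_apply, Measure.finsetSum_apply, smul_eq_mul, measure_univ]
    rw [Finset.sum_congr rfl (g := fun _ => 1)]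
    · simp [ENNReal.inv_mul_cancel hc]
    · intro p hp
      have := h2 p hp
      simp
      exact ENNReal.inv_mul_cancel (by simp; omega) (by simp)
  · rw [ae_iff]
    simp only [Measure.smul_apply, Measure.finsetSum_apply, smul_eq_mul]
    rw [Finset.sum_eq_zero, mul_zero]
    intro p hp
    rw [Finset.sum_eq_zero, mul_zero]
    intro a ha
    rw [Finset.mem_Icc] at ha
    rw [← ae_iff]
    have : ∃ q ∈ S, ∃ b : ℕ, 1 ≤ b ∧ b ≤ q ∧ (a : ℝ) / p = (b : ℝ) / q := ⟨p, hp, a, ha.1, ha.2, rfl⟩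
    rw [MeasureTheory.ae_dirac_eq]
    exact this
  · intro t
    have hi : ∀ y : ℝ, Integrable (fun x : ℝ =>
        Complex.exp (((-2 * Real.pi * t * x : ℝ) : ℂ) * Complex.I)) (Measure.dirac y) := by
      intro y
      refine Integrable.of_bound (C := 1) (by fun_prop) ?_
      filter_upwards with x
      rw [Complex.norm_exp_ofReal_mul_I]
    unfold fourierT
    rw [integral_smul_measure, integral_finsetSum_measure]
    · rw [ENNReal.toReal_inv, ENNReal.toReal_natCast]
      rw [Complex.real_smul]
      push_cast
      rw [one_div]
      congr 1
      apply Finset.sum_congr rfl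
      intro p hp
      rw [integral_smul_measure, integral_finsetSum_measure]
      · rw [ENNReal.toReal_inv, ENNReal.toReal_natCast, Complex.real_smul]
        push_cast
        rw [one_div]
        congr 1
        apply Finset.sum_congr rfl
        intro a ha
        rw [integral_dirac]
        push_cast
        rfl
      · intro a ha; exact_mod_cast hi _
    · intro p hp
      have := h2 p hp
      refine Integrable.smul_measure ?_ (by simp; omega)
      rw [integrable_finsetSum_measure]
      intro a ha; exact hi _

lemma card_prime_dvd (S : Finset ℕ) (R K : ℕ) (hR : 2 ≤ R) (hS : ∀ p ∈ S, p.Prime ∧ R ≤ p)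
    (n : ℤ) (hn : n ≠ 0) (hlt : n.natAbs < R ^ (K + 1)) :
    (S.filter (fun p : ℕ => (p : ℤ) ∣ n)).card ≤ K := by
  set T := S.filter (fun p : ℕ => (p : ℤ) ∣ n) with hT
  have h1 : ∏ p ∈ T, p ∣ n.natAbs := by
    apply Finset.prod_primes_dvd
    · intro p hp
      exact (hS p (Finset.mem_filter.mp hp).1).1.prime
    · intro p hp
      exact Int.natCast_dvd.mp (Finset.mem_filter.mp hp).2
  have h2 : R ^ T.card ≤ ∏ p ∈ T, p := by
    apply Finset.pow_card_le_prod
    intro p hp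
    exact (hS p (Finset.mem_filter.mp hp).1).2
  have h3 : ∏ p ∈ T, p ≤ n.natAbs := Nat.le_of_dvd (Int.natAbs_pos.mpr hn) h1
  have h4 : R ^ T.card < R ^ (K + 1) := by omega
  have := (Nat.pow_lt_pow_iff_right (by omega : 1 < R)).mp h4
  omega

lemma card_bad (S : Finset ℕ) (D K : ℕ) (hD : 3 ≤ D) (hS : ∀ p ∈ S, p.Prime ∧ D ^ 2 ≤ p)
    (t : ℝ) (ht : (D : ℝ) ^ 2 / 2 < |t|) (ht2 : |t| + D < ((D : ℝ) ^ 2) ^ (K + 1)) (B : Finset ℕ)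
    (hBS : B ⊆ S) (hB : ∀ p ∈ B, ∃ m : ℤ, |t - m * p| < D) :
    B.card ≤ (2 * D + 1) * K := by
  have hD' : (3 : ℝ) ≤ D := by exact_mod_cast hD
  have hsub : B ⊆ (Finset.Icc (⌊t⌋ - D + 1) (⌊t⌋ + D)).biUnion
      (fun n => if n ≠ 0 ∧ n.natAbs < (D ^ 2) ^ (K + 1) then S.filter (fun p : ℕ => (p : ℤ) ∣ n) else ∅) := by
    intro p hp
    obtain ⟨m, hm⟩ := hB p hp
    rw [abs_lt] at hm
    rw [Finset.mem_biUnion]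
    refine ⟨m * p, ?_, ?_⟩
    · rw [Finset.mem_Icc]
      have f1 := Int.floor_le t
      have f2 := Int.lt_floor_add_one t
      constructor
      · have : (⌊t⌋ - D : ℝ) < m * p := by linarith
        have : (⌊t⌋ - D : ℤ) < m * p := by exact_mod_cast this
        omega
      · have : (m * p : ℝ) < ⌊t⌋ + D + 1 := by linarith
        have : (m * p : ℤ) < ⌊t⌋ + D + 1 := by exact_mod_cast this
        omega
    · have habs : |(m * p : ℝ)| ≤ |t| + D := by
        rcases abs_cases t with h | h <;> rcases abs_cases (m * p : ℝ) with h' | h' <;> linarith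
      have hne : (m * p : ℝ) ≠ 0 := by
        intro h0
        rw [h0] at hm
        rcases abs_cases t with h | h <;> nlinarith
      rw [if_pos]
      · exact Finset.mem_filter.mpr ⟨hBS hp, Dvd.intro_left _ rfl⟩
      · constructor
        · intro h0; apply hne; exact_mod_cast h0
        · have : (((m * p : ℤ).natAbs : ℕ) : ℝ) < ((D : ℝ) ^ 2) ^ (K + 1) := by
            rw [Nat.cast_natAbs]
            push_cast
            linarith
          exact_mod_cast this
  refine (Finset.card_le_card hsub).trans ?_
  refine (Finset.card_biUnion_le_card_mul _ _ K ?_).trans ?_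
  · intro n _
    split_ifs with h
    · exact card_prime_dvd S (D ^ 2) K (by nlinarith) hS n h.1 h.2
    · simp
  · apply Nat.mul_le_mul_right
    simp
    omega

lemma exists_primes : ∀ᶠ D : ℕ in atTop, ∃ S : Finset ℕ, D ^ 3 ≤ S.card ∧
    ∀ p ∈ S, p.Prime ∧ D ^ 2 ≤ p ∧ p ≤ D ^ 4 := by
  have hlog : ∀ᶠ D : ℕ in atTop, Real.log D ≤ D / 64 := by
    have h1 := (Real.isLittleO_log_id_atTop.bound (c := 1 / 64) (by norm_num))
    have h2 := tendsto_natCast_atTop_atTop (R := ℝ) |>.eventually h1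
    filter_upwards [h2, eventually_ge_atTop 1] with D hD h1
    have : (1 : ℝ) ≤ D := by exact_mod_cast h1
    simp only [id, Real.norm_eq_abs] at hD
    rw [abs_of_nonneg (Real.log_nonneg this), abs_of_nonneg (by linarith)] at hD
    linarith
  filter_upwards [hlog, eventually_ge_atTop 4] with D hl hD
  have hD' : (4 : ℝ) ≤ D := by exact_mod_cast hD
  refine ⟨(Nat.primesLE (D ^ 4)).filter (fun p => D ^ 2 ≤ p), ?_, ?_⟩
  · have hpi := Chebyshev.pi_ge (D ^ 4)
    have hlp : 0 < Real.log D := Real.log_pos (by linarith)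
    have hcount : Nat.primeCounting (D ^ 4) ≤
        ((Nat.primesLE (D ^ 4)).filter (fun p => D ^ 2 ≤ p)).card + D ^ 2 := by
      have e : Nat.primeCounting (D ^ 4) = (Nat.primesLE (D ^ 4)).card := by
        simp [Nat.primesLE_card_eq_primeCounting]
      rw [e, ← Finset.card_filter_add_card_filter_not (s := Nat.primesLE (D ^ 4)) (fun p => D ^ 2 ≤ p)]
      gcongr
      calc _ ≤ (Finset.range (D ^ 2)).card := by
            apply Finset.card_le_card
            intro p hp
            simp at hp ⊢
            omega
        _ = D ^ 2 := by simp
    have hbig : (D : ℝ) ^ 3 + D ^ 2 ≤ Nat.primeCounting (D ^ 4) := by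
      refine le_trans ?_ hpi
      push_cast
      rw [Real.log_pow, le_div_iff₀ (by positivity)]
      have e1 : Real.log ((D : ℝ) ^ 4 + 1) ≤ 5 * Real.log D := by
        rw [show (5 : ℝ) * Real.log D = Real.log ((D : ℝ) ^ 5) by rw [Real.log_pow]; norm_num]
        apply Real.log_le_log (by positivity)
        have : (1 : ℝ) ≤ D ^ 4 := one_le_pow₀ (by linarith)
        nlinarith
      have e2 : (0.69 : ℝ) < Real.log 2 := by linarith [Real.log_two_gt_d9]
      have e3 : (0 : ℝ) < D ^ 4 := by positivity
      have e4 : (D : ℝ) ^ 2 ≤ D ^ 3 := pow_le_pow_right₀ (by linarith) (by norm_num)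
      push_cast
      have e5 : ((D : ℝ) ^ 3 + D ^ 2) * (4 * Real.log D) ≤ (2 * D ^ 3) * (4 * (D / 64)) := by
        gcongr; linarith
      have e6 : (D : ℝ) ≤ D ^ 4 := by
        calc (D : ℝ) = D ^ 1 := by ring
          _ ≤ _ := pow_le_pow_right₀ (by linarith) (by norm_num)
      nlinarith
    have hcount' : (Nat.primeCounting (D ^ 4) : ℝ) ≤
        ((Nat.primesLE (D ^ 4)).filter (fun p => D ^ 2 ≤ p)).card + D ^ 2 := by exact_mod_cast hcount
    have : (D : ℝ) ^ 3 ≤ ((Nat.primesLE (D ^ 4)).filter (fun p => D ^ 2 ≤ p)).card := by linarith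
    exact_mod_cast this
  · intro p hp
    rw [Finset.mem_filter, Nat.mem_primesLE] at hp
    tauto

lemma norm_inner_le (p : ℕ) (t : ℝ) (hp : 0 < p) :
    ‖(1 / (p : ℂ)) * ∑ a ∈ Finset.Icc 1 p,
      Complex.exp (((-2 * Real.pi * t * ((a : ℝ) / p) : ℝ) : ℂ) * Complex.I)‖ ≤ 1 := by
  have hp' : (0 : ℝ) < p := by exact_mod_cast hp
  rw [norm_mul, norm_div, norm_one, Complex.norm_natCast, one_div, inv_mul_le_iff₀ hp', mul_one]
  refine (norm_sum_le _ _).trans ?_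
  rw [Finset.sum_congr rfl (g := fun _ => (1 : ℝ)) (fun a _ => Complex.norm_exp_ofReal_mul_I _)]
  simp

lemma norm_inner_le' (p : ℕ) (t D : ℝ) (hp : 0 < p) (hD : 0 < D) (h : ∀ m : ℤ, D ≤ |t - m * p|) :
    ‖(1 / (p : ℂ)) * ∑ a ∈ Finset.Icc 1 p,
      Complex.exp (((-2 * Real.pi * t * ((a : ℝ) / p) : ℝ) : ℂ) * Complex.I)‖ ≤ 1 / D := by
  have hp' : (0 : ℝ) < p := by exact_mod_cast hp
  rw [norm_mul, norm_div, norm_one, Complex.norm_natCast, one_div, inv_mul_le_iff₀ hp']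
  refine (geo_bound p hp t D hD h).trans (le_of_eq ?_)
  ring

lemma rpow_cmp (x : ℝ) (hx : 1 ≤ x) (c : ℝ) (hc : 0 < c) (h : c ≤ Real.log (Real.log x)) :
    x ^ (-(1 / c)) ≤ x ^ (-(1 / Real.log (Real.log x))) := by
  apply Real.rpow_le_rpow_of_exponent_le hx
  have := one_div_le_one_div_of_le hc h
  linarith

lemma stage (k A : ℕ) (hA : 1 ≤ A) :
    ∃ (D : ℕ) (ν : Measure ℝ), 2 ≤ D ∧ A * (4 * A ^ k) ≤ D ∧ IsProbabilityMeasure ν ∧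
      (∀ᵐ x ∂ν, ∃ p a : ℕ, 2 ≤ p ∧ p ≤ D ^ 4 ∧ 1 ≤ a ∧ a ≤ p ∧ x = (a : ℝ) / p) ∧
      ∀ ξ : ℝ, Real.exp (Real.exp 2) ≤ |ξ| → (((4 * A ^ k : ℕ) : ℝ)) ^ 2 ≤ |ξ| →
        |ξ| ≤ (D : ℝ) ^ (10 * k + 14) →
        ‖fourierT ν (ξ / ((4 * A ^ k : ℕ) : ℝ))‖ ≤ |ξ| ^ (-(1 / Real.log (Real.log |ξ|))) := by
  have hll : ∀ᶠ D : ℕ in atTop, (20 * k + 28 : ℝ) ≤ Real.log (Real.log D) :=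
    (Real.tendsto_log_atTop.comp (Real.tendsto_log_atTop.comp
      (tendsto_natCast_atTop_atTop (R := ℝ)))).eventually_ge_atTop _
  obtain ⟨D, ⟨S, hcard, hS⟩, hDll, hDA, hD9, hDK⟩ := (exists_primes.and (hll.and
    ((eventually_ge_atTop (A * (4 * A ^ k))).and ((eventually_ge_atTop 9).and
      (eventually_ge_atTop (3 * (5 * k + 8))))))).exists
  have hD9' : (9 : ℝ) ≤ D := by exact_mod_cast hD9
  have hDpos : (0 : ℝ) < D := by linarith
  have hcpos : 0 < S.card := lt_of_lt_of_le (by positivity) hcard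
  have hcpos' : (0 : ℝ) < S.card := by exact_mod_cast hcpos
  have hcard' : (D : ℝ) ^ 3 ≤ S.card := by exact_mod_cast hcard
  obtain ⟨ν, hν, hae, hF⟩ := exists_nu S (Finset.card_pos.mp hcpos) (fun p hp => (hS p hp).1.two_le)
  refine ⟨D, ν, by omega, hDA, hν, ?_, ?_⟩
  · filter_upwards [hae] with x hx
    obtain ⟨p, hp, a, h1, h2, h3⟩ := hx
    exact ⟨p, a, (hS p hp).1.two_le, (hS p hp).2.2, h1, h2, h3⟩
  intro ξ hξ hNξ hξD
  set N : ℕ := 4 * A ^ k with hN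
  have hNpos : 1 ≤ N := by have := Nat.one_le_pow k A hA; omega
  have hNpos' : (1 : ℝ) ≤ N := by exact_mod_cast hNpos
  set t : ℝ := ξ / N with ht
  have habst : |t| = |ξ| / N := by rw [ht, abs_div, abs_of_pos (by linarith : (0 : ℝ) < N)]
  have hee : (1 : ℝ) < Real.exp (Real.exp 2) := by
    rw [← Real.exp_zero]; exact Real.exp_lt_exp.mpr (Real.exp_pos _)
  have hξ1 : 1 < |ξ| := by linarith
  have htpos : 0 < |t| := by rw [habst]; positivity
  have hFle : ‖fourierT ν t‖ ≤ (1 / (S.card : ℝ)) * ∑ p ∈ S, ‖(1 / (p : ℂ)) *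
        ∑ a ∈ Finset.Icc 1 p,
          Complex.exp (((-2 * Real.pi * t * ((a : ℝ) / p) : ℝ) : ℂ) * Complex.I)‖ := by
    rw [hF, norm_mul, norm_div, norm_one, Complex.norm_natCast]
    gcongr
    exact norm_sum_le _ _
  refine hFle.trans ?_
  rcases le_or_gt |t| ((D : ℝ) ^ 2 / 2) with hcase | hcase
  · have h1 : ∀ p ∈ S, ‖(1 / (p : ℂ)) * ∑ a ∈ Finset.Icc 1 p,
          Complex.exp (((-2 * Real.pi * t * ((a : ℝ) / p) : ℝ) : ℂ) * Complex.I)‖ ≤ 1 / |t| := by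
      intro p hp
      apply norm_inner_le' p t |t| (hS p hp).1.pos htpos
      intro m
      have hpD : (D : ℝ) ^ 2 ≤ p := by exact_mod_cast (hS p hp).2.1
      rcases eq_or_ne m 0 with rfl | hm
      · simp
      · have h2 : (1 : ℝ) ≤ |(m : ℝ)| := by exact_mod_cast Int.one_le_abs hm
        have h3 : |(m * p : ℝ)| - |t| ≤ |t - m * p| := by
          rw [abs_sub_comm]; exact abs_sub_abs_le_abs_sub _ _
        rw [abs_mul, Nat.abs_cast] at h3
        nlinarith
    have h2 : (1 / (S.card : ℝ)) * ∑ p ∈ S, ‖(1 / (p : ℂ)) * ∑ a ∈ Finset.Icc 1 p,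
          Complex.exp (((-2 * Real.pi * t * ((a : ℝ) / p) : ℝ) : ℂ) * Complex.I)‖ ≤ 1 / |t| := by
      rw [one_div, inv_mul_le_iff₀ hcpos']
      refine (Finset.sum_le_sum h1).trans ?_
      simp
    refine h2.trans ?_
    have h3 : 1 / |t| ≤ |ξ| ^ (-(1 / 2 : ℝ)) := by
      rw [habst, Real.rpow_neg (abs_nonneg _), ← Real.sqrt_eq_rpow, one_div_div, ← one_div,
        div_le_div_iff₀ (by linarith) (Real.sqrt_pos.mpr (by linarith)), one_mul]
      have h5 : (N : ℝ) ≤ Real.sqrt |ξ| := Real.le_sqrt_of_sq_le hNξ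
      have h6 := Real.mul_self_sqrt (abs_nonneg ξ)
      nlinarith [Real.sqrt_nonneg |ξ|]
    refine h3.trans (rpow_cmp _ hξ1.le 2 (by norm_num) ?_)
    rw [Real.le_log_iff_exp_le (Real.log_pos hξ1), Real.le_log_iff_exp_le (by linarith)]
    exact hξ
  · classical
    set B := S.filter (fun p : ℕ => ∃ m : ℤ, |t - m * p| < D) with hB
    have htξ : |t| ≤ |ξ| := by
      rw [habst]; exact div_le_self (abs_nonneg _) hNpos'
    have hBc : B.card ≤ (2 * D + 1) * (5 * k + 8) := by
      apply card_bad S D (5 * k + 8) (by omega) (fun p hp => ⟨(hS p hp).1, (hS p hp).2.1⟩) t hcase ?_ B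
        (Finset.filter_subset _ _) (fun p hp => (Finset.mem_filter.mp hp).2)
      have e1 : (D : ℝ) ≤ (D : ℝ) ^ (10 * k + 14) := le_self_pow₀ (by linarith) (by omega)
      have e2 : ((D : ℝ) ^ 2) ^ (5 * k + 8 + 1) = (D : ℝ) ^ (10 * k + 14) * D ^ 4 := by ring
      have e3 : (2 : ℝ) < D ^ 4 := lt_of_lt_of_le (by linarith) (le_self_pow₀ (by linarith : (1:ℝ) ≤ D) (by omega : 4 ≠ 0))
      rw [e2]
      nlinarith
    have hBc' : (B.card : ℝ) ≤ (2 * D + 1) * (5 * k + 8) := by exact_mod_cast hBc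
    have hDK' : (3 * (5 * k + 8) : ℝ) ≤ D := by exact_mod_cast hDK
    have h1 : ∀ p ∈ S, ‖(1 / (p : ℂ)) * ∑ a ∈ Finset.Icc 1 p,
          Complex.exp (((-2 * Real.pi * t * ((a : ℝ) / p) : ℝ) : ℂ) * Complex.I)‖ ≤
            (if ∃ m : ℤ, |t - m * p| < D then (1 : ℝ) else 0) + 1 / D := by
      intro p hp
      split_ifs with h
      · have := norm_inner_le p t (hS p hp).1.pos
        have : (0 : ℝ) < 1 / D := by positivity
        linarith
      · push Not at h
        rw [zero_add]
        exact norm_inner_le' p t D (hS p hp).1.pos hDpos h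
    have h2 : (1 / (S.card : ℝ)) * ∑ p ∈ S, ‖(1 / (p : ℂ)) * ∑ a ∈ Finset.Icc 1 p,
          Complex.exp (((-2 * Real.pi * t * ((a : ℝ) / p) : ℝ) : ℂ) * Complex.I)‖ ≤ 2 / D := by
      rw [one_div, inv_mul_le_iff₀ hcpos']
      refine (Finset.sum_le_sum h1).trans ?_
      rw [Finset.sum_add_distrib, ← Finset.sum_filter, ← hB]
      simp only [Finset.sum_const, nsmul_eq_mul, mul_one]
      have : (B.card : ℝ) ≤ S.card * (1 / D) := by
        rw [mul_one_div, le_div_iff₀ hDpos]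
        have : (B.card : ℝ) ≤ D ^ 2 := by nlinarith
        nlinarith
      have e : (S.card : ℝ) * (2 / D) = S.card * (1 / D) + S.card * (1 / D) := by ring
      linarith
    refine h2.trans ?_
    have hDξ : (D : ℝ) ≤ |ξ| := by nlinarith
    have hlogD : 0 < Real.log D := Real.log_pos (by linarith)
    have h3 : 2 / (D : ℝ) ≤ |ξ| ^ (-(1 / (20 * k + 28) : ℝ)) := by
      have e1 : 2 / (D : ℝ) ≤ (D : ℝ) ^ (-(1 / 2 : ℝ)) := by
        rw [Real.rpow_neg hDpos.le, ← Real.sqrt_eq_rpow, ← one_div,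
          div_le_div_iff₀ hDpos (Real.sqrt_pos.mpr hDpos), one_mul]
        have e2 : (3 : ℝ) ≤ Real.sqrt D := Real.le_sqrt_of_sq_le (by linarith)
        have e3 := Real.mul_self_sqrt hDpos.le
        nlinarith
      have e4 : ((D : ℝ) ^ (10 * k + 14)) ^ (-(1 / (20 * k + 28) : ℝ)) = (D : ℝ) ^ (-(1 / 2 : ℝ)) := by
        rw [← Real.rpow_natCast, ← Real.rpow_mul hDpos.le]
        congr 1
        push_cast
        field_simp
        ring
      rw [← e4] at e1
      refine e1.trans ?_
      apply Real.rpow_le_rpow_of_nonpos (by linarith) hξD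
      have : (0 : ℝ) < 1 / (20 * k + 28) := by positivity
      linarith
    refine h3.trans (rpow_cmp _ hξ1.le (20 * k + 28) (by positivity) ?_)
    refine hDll.trans ?_
    have hlD := Real.log_le_log hDpos hDξ
    exact Real.log_le_log hlogD hlD

open ProbabilityTheory in
lemma fourier_combine (N : ℕ → ℕ) (ν : ℕ → Measure ℝ) [∀ k, IsProbabilityMeasure (ν k)]
    (hsum : ∀ᵐ ω ∂(Measure.infinitePi ν), Summable (fun k => ω k / (N k : ℝ))) (k : ℕ) (ξ : ℝ) :
    ‖fourierT ((Measure.infinitePi ν).map (fun ω : ℕ → ℝ => ∑' k, ω k / (N k : ℝ))) ξ‖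
      ≤ ‖fourierT (ν k) (ξ / N k)‖ := by
  set P := Measure.infinitePi ν with hP
  let X : (ℕ → ℝ) → ℝ := fun ω => ω k
  let Y : (ℕ → ℝ) → ℝ := fun ω => ∑' j, if j = k then 0 else ω j / (N j : ℝ)
  have hX : Measurable X := measurable_pi_apply k
  have hY : Measurable Y := by
    refine Measurable.tsum fun j => ?_
    split_ifs <;> fun_prop
  have hind : IndepFun X Y P := by
    have h1 : iIndepFun (fun i (ω : ℕ → ℝ) => ω i) P :=
      iIndepFun_infinitePi (X := fun _ x => x) (fun _ => measurable_id)
    rw [iIndepFun_iff_iIndep] at h1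
    have h2 := indep_iSup_of_disjoint (fun i => (measurable_pi_apply i).comap_le) h1
      (S := {k}) (T := {k}ᶜ) disjoint_compl_right
    rw [IndepFun_iff_Indep]
    refine indep_of_indep_of_le_left (indep_of_indep_of_le_right h2 ?_) ?_
    · rw [← measurable_iff_comap_le]
      refine @Measurable.tsum _ _ _ (_) _ _ _ _ _ _ _ _ _ _ _ _ fun j => ?_
      split_ifs with h
      · exact @measurable_const _ _ _ (_) _
      · refine @Measurable.div_const _ _ _ _ _ (_) _ ?_ _
        rw [measurable_iff_comap_le]
        exact le_iSup₂_of_le j h le_rfl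
    · exact le_iSup₂_of_le k rfl le_rfl
  let f : ℝ → ℂ := fun x => Complex.exp (((-2 * Real.pi * (ξ / N k) * x : ℝ) : ℂ) * Complex.I)
  let g : ℝ → ℂ := fun x => Complex.exp (((-2 * Real.pi * ξ * x : ℝ) : ℂ) * Complex.I)
  have hf : Continuous f := by fun_prop
  have hg : Continuous g := by fun_prop
  have hZ : Measurable (fun ω : ℕ → ℝ => ∑' k, ω k / (N k : ℝ)) :=
    Measurable.tsum fun j => by fun_prop
  have e1 : fourierT (P.map (fun ω : ℕ → ℝ => ∑' k, ω k / (N k : ℝ))) ξ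
      = ∫ ω, f (X ω) * g (Y ω) ∂P := by
    unfold fourierT
    rw [integral_map hZ.aemeasurable hg.aestronglyMeasurable]
    apply integral_congr_ae
    filter_upwards [hsum] with ω hω
    rw [hω.tsum_eq_add_tsum_ite k]
    simp only [f, g, X, Y]
    rw [← Complex.exp_add]
    congr 1
    push_cast
    ring
  have e2 : ∫ ω, f (X ω) ∂P = fourierT (ν k) (ξ / N k) := by
    unfold fourierT
    rw [← Measure.infinitePi_map_eval ν k, integral_map hX.aemeasurable hf.aestronglyMeasurable]
  rw [e1, hind.integral_fun_comp_mul_comp hX.aemeasurable hY.aemeasurable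
    hf.aestronglyMeasurable hg.aestronglyMeasurable, e2, norm_mul]
  have e3 : ‖∫ ω, g (Y ω) ∂P‖ ≤ 1 := by
    have := norm_integral_le_of_norm_le_const (μ := P) (f := fun ω => g (Y ω)) (C := 1)
      (by filter_upwards with ω; exact (Complex.norm_exp_ofReal_mul_I _).le)
    simpa using this
  exact mul_le_of_le_one_right (norm_nonneg _) e3

lemma partial_rat (A N D : ℕ → ℕ) (hA0 : A 0 = 1) (hN : ∀ k, 1 ≤ N k)
    (hA : ∀ k, A (k + 1) = A k * N k * D k ^ 4) (x : ℕ → ℝ)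
    (hx : ∀ k, ∃ p a : ℕ, 2 ≤ p ∧ p ≤ D k ^ 4 ∧ 1 ≤ a ∧ a ≤ p ∧ x k = (a : ℝ) / p) (k : ℕ) :
    ∃ a q : ℕ, 2 ^ k ≤ q ∧ q ≤ A k ∧ ∑ j ∈ Finset.range k, x j / (N j : ℝ) = (a : ℝ) / q := by
  induction k with
  | zero => exact ⟨0, 1, by simp, by simp [hA0], by simp⟩
  | succ k ih =>
    obtain ⟨a, q, h1, h2, h3⟩ := ih
    obtain ⟨p, b, hp, hp4, -, -, hxk⟩ := hx k
    have hq : 0 < q := lt_of_lt_of_le (by positivity) h1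
    have hNk := hN k
    refine ⟨a * (N k * p) + b * q, q * N k * p, ?_, ?_, ?_⟩
    · rw [pow_succ]
      exact Nat.mul_le_mul (by nlinarith) hp
    · rw [hA]
      gcongr
    · rw [Finset.sum_range_succ, h3, hxk]
      have : (q : ℝ) ≠ 0 := by positivity
      have : (p : ℝ) ≠ 0 := by positivity
      have : (N k : ℝ) ≠ 0 := by positivity
      push_cast
      field_simp

lemma summable_aux (N : ℕ → ℕ) (hN1 : 1 ≤ N 0) (hN : ∀ k, 2 * N k ≤ N (k + 1)) (x : ℕ → ℝ)
    (hx : ∀ k, 0 < x k ∧ x k ≤ 1) (k : ℕ) :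
    Summable (fun j => x j / (N j : ℝ)) ∧ 0 < ∑' j, x (j + k) / (N (j + k) : ℝ) ∧
      ∑' j, x (j + k) / (N (j + k) : ℝ) ≤ 2 / N k := by
  have hpos : ∀ k, 0 < N k := by
    intro k
    induction k with
    | zero => omega
    | succ k ih => have := hN k; omega
  have hle : ∀ k j, 2 ^ j * N k ≤ N (j + k) := by
    intro k j
    induction j with
    | zero => simp
    | succ j ih =>
      have := hN (j + k)
      rw [show j + 1 + k = j + k + 1 by ring, pow_succ]
      nlinarith
  have hterm : ∀ k j, x (j + k) / (N (j + k) : ℝ) ≤ (1 / 2) ^ j * (1 / N k) := by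
    intro k j
    have h1 : (2 ^ j * N k : ℝ) ≤ N (j + k) := by exact_mod_cast hle k j
    have h2 : (0 : ℝ) < N k := by exact_mod_cast hpos k
    calc x (j + k) / (N (j + k) : ℝ) ≤ 1 / (2 ^ j * N k) := by
          gcongr
          exact (hx _).2
      _ = _ := by rw [one_div_pow]; field_simp
  have hnn : ∀ j, 0 < x j / (N j : ℝ) := fun j =>
    div_pos (hx j).1 (by exact_mod_cast hpos j)
  have hgs : ∀ k, Summable (fun j : ℕ => (1 / 2 : ℝ) ^ j * (1 / N k)) := fun k =>
    summable_geometric_two.mul_right _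
  have hs : ∀ k, Summable (fun j => x (j + k) / (N (j + k) : ℝ)) := fun k =>
    Summable.of_nonneg_of_le (fun j => (hnn _).le) (hterm k) (hgs k)
  refine ⟨by simpa using hs 0, (hs k).tsum_pos (fun j => (hnn _).le) 0 (hnn _), ?_⟩
  refine ((hs k).tsum_le_tsum (hterm k) (hgs k)).trans ?_
  rw [tsum_mul_right, tsum_geometric_two]
  exact le_of_eq (by ring)

theorem stmt19 :
    ∃ μ : Measure ℝ, IsProbabilityMeasure μ ∧ μ {x : ℝ | Liouville x}ᶜ = 0 ∧
      ∃ C > (0 : ℝ), ∃ M > Real.exp (Real.exp 1),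
        ∀ ξ : ℝ, M ≤ |ξ| →
          ‖fourierT μ ξ‖ ≤ C * |ξ| ^ (-(1 / Real.log (Real.log |ξ|))) := by
  choose! Df νf hD2 hDA hprob hae hF using stage
  let A : ℕ → ℕ := fun k => Nat.rec 1 (fun k a => a * (4 * a ^ k) * Df k a ^ 4) k
  have hA0 : A 0 = 1 := rfl
  have hAs : ∀ k, A (k + 1) = A k * (4 * A k ^ k) * Df k (A k) ^ 4 := fun k => rfl
  clear_value A
  have hA1 : ∀ k, 1 ≤ A k := by
    intro k
    induction k with
    | zero => omega
    | succ k ih =>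
      rw [hAs]
      have := hD2 k (A k) ih
      exact Nat.one_le_iff_ne_zero.mpr (by positivity)
  let D : ℕ → ℕ := fun k => Df k (A k)
  let N : ℕ → ℕ := fun k => 4 * A k ^ k
  let ν : ℕ → Measure ℝ := fun k => νf k (A k)
  have hνp : ∀ k, IsProbabilityMeasure (ν k) := fun k => hprob k (A k) (hA1 k)
  have hN1 : ∀ k, 1 ≤ N k := fun k => by
    have := Nat.one_le_pow k (A k) (hA1 k)
    simp only [N]; omega
  have hAN : ∀ k, A (k + 1) = A k * N k * D k ^ 4 := hAs
  have hA2 : ∀ k, 2 * A k ≤ A (k + 1) := by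
    intro k
    rw [hAN]
    have h1 : 2 ≤ D k := hD2 k (A k) (hA1 k)
    have h2 : 2 ≤ D k ^ 4 := h1.trans (Nat.le_self_pow (by norm_num) _)
    calc 2 * A k = A k * 1 * 2 := by ring
      _ ≤ _ := by gcongr; exact hN1 k
  have hN2 : ∀ k, 2 * N k ≤ N (k + 1) := by
    intro k
    simp only [N]
    have h1 := hA2 k
    have h2 : A k ^ k ≤ A (k + 1) ^ k := Nat.pow_le_pow_left (by omega) k
    have h3 := hA1 k
    have h4 := Nat.one_le_pow k (A k) h3
    rw [pow_succ]
    nlinarith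
  have hNsq : ∀ k, ((N (k + 1) : ℕ) : ℝ) ^ 2 ≤ (D k : ℝ) ^ (10 * k + 14) := by
    intro k
    have h1 : A k * N k ≤ D k := hDA k (A k) (hA1 k)
    have h2 : 2 ≤ D k := hD2 k (A k) (hA1 k)
    have h3 : A (k + 1) ≤ D k ^ 5 := by
      rw [hAN]
      calc _ ≤ D k * D k ^ 4 := Nat.mul_le_mul_right _ h1
        _ = _ := by ring
    have h4 : N (k + 1) ^ 2 ≤ D k ^ (10 * k + 14) := by
      calc N (k + 1) ^ 2 = 2 ^ 4 * (A (k + 1) ^ (k + 1)) ^ 2 := by simp only [N]; ring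
        _ ≤ D k ^ 4 * ((D k ^ 5) ^ (k + 1)) ^ 2 := by gcongr
        _ = _ := by ring
    exact_mod_cast h4
  have hall : ∀ᵐ ω ∂(Measure.infinitePi ν), ∀ k, ∃ p a : ℕ,
      2 ≤ p ∧ p ≤ D k ^ 4 ∧ 1 ≤ a ∧ a ≤ p ∧ ω k = (a : ℝ) / p := by
    rw [ae_all_iff]
    intro k
    exact (measurePreserving_eval_infinitePi ν k).quasiMeasurePreserving.ae (hae k (A k) (hA1 k))
  have h01 : ∀ ω : ℕ → ℝ, (∀ k, ∃ p a : ℕ,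
      2 ≤ p ∧ p ≤ D k ^ 4 ∧ 1 ≤ a ∧ a ≤ p ∧ ω k = (a : ℝ) / p) → ∀ k, 0 < ω k ∧ ω k ≤ 1 := by
    intro ω hω k
    obtain ⟨p, a, h1, -, h3, h4, h5⟩ := hω k
    have hp : (0 : ℝ) < p := by positivity
    have ha : (0 : ℝ) < a := by positivity
    rw [h5]
    exact ⟨by positivity, (div_le_one hp).mpr (by exact_mod_cast h4)⟩
  have hZ : Measurable (fun ω : ℕ → ℝ => ∑' k, ω k / (N k : ℝ)) :=
    Measurable.tsum fun j => by fun_prop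
  refine ⟨(Measure.infinitePi ν).map (fun ω : ℕ → ℝ => ∑' k, ω k / (N k : ℝ)),
    Measure.isProbabilityMeasure_map hZ.aemeasurable, ?_, 1, one_pos, Real.exp (Real.exp 2), ?_, ?_⟩
  · have hm : MeasurableSet {x : ℝ | Liouville x} := IsGδ.setOfPred_liouville.measurableSet
    rw [Measure.map_apply hZ hm.compl]
    change (Measure.infinitePi ν) {ω | ¬ Liouville (∑' k, ω k / (N k : ℝ))} = 0
    rw [← ae_iff]
    filter_upwards [hall] with ω hω
    intro n
    set k := n + 1 with hk
    obtain ⟨a, q, hq2, hqA, hsum⟩ := partial_rat A N D hA0 hN1 hAN ω hω k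
    obtain ⟨hs, hpos, hle⟩ := summable_aux N (hN1 0) hN2 ω (h01 ω hω) k
    have hdec := hs.sum_add_tsum_nat_add k
    have hq2' : 2 ≤ q := le_trans (Nat.le_self_pow (by omega) 2) hq2
    have hq2r : (2 : ℝ) ≤ q := by exact_mod_cast hq2'
    refine ⟨a, q, by exact_mod_cast hq2', ?_, ?_⟩
    · push_cast
      rw [← hdec, hsum]
      linarith
    · push_cast
      rw [← hdec, hsum, add_sub_cancel_left, abs_of_pos hpos]
      refine hle.trans_lt ?_
      have h1 : (2 * q ^ n : ℕ) < N k := by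
        have e1 : q ^ n ≤ q ^ k := Nat.pow_le_pow_right (by omega) (by omega)
        have e2 : q ^ k ≤ A k ^ k := Nat.pow_le_pow_left hqA k
        have e3 : 0 < q ^ n := by positivity
        simp only [N]
        omega
      have h1' : (2 * q ^ n : ℝ) < N k := by exact_mod_cast h1
      rw [div_lt_div_iff₀ (by exact_mod_cast hN1 k) (by positivity)]
      linarith
  · exact Real.exp_lt_exp.mpr (Real.exp_lt_exp.mpr (by norm_num))
  · intro ξ hξ
    rw [one_mul]
    have hNt : ∀ k, 2 ^ k ≤ N k := by
      intro k
      induction k with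
      | zero => simpa using hN1 0
      | succ k ih => have := hN2 k; rw [pow_succ]; omega
    have hex : ∃ k, |ξ| ≤ ((N (k + 1) : ℕ) : ℝ) ^ 2 := by
      obtain ⟨k, hk⟩ := pow_unbounded_of_one_lt |ξ| (by norm_num : (1 : ℝ) < 2)
      refine ⟨k, ?_⟩
      have h1 : (2 : ℝ) ^ (k + 1) ≤ N (k + 1) := by exact_mod_cast hNt (k + 1)
      have h2 : (2 : ℝ) ^ k ≤ 2 ^ (k + 1) := pow_le_pow_right₀ (by norm_num) (by omega)
      have h3 : (1 : ℝ) ≤ N (k + 1) := by exact_mod_cast hN1 (k + 1)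
      nlinarith
    classical
    let k := Nat.find hex
    have hk1 : |ξ| ≤ ((N (k + 1) : ℕ) : ℝ) ^ 2 := Nat.find_spec hex
    have hk2 : ((N k : ℕ) : ℝ) ^ 2 ≤ |ξ| := by
      rcases Nat.eq_zero_or_pos k with h0 | h0
      · rw [h0]
        simp only [N, hA0]
        have h3 : (3 : ℝ) ≤ Real.exp 2 := by linarith [Real.add_one_le_exp (2 : ℝ)]
        have h4 : Real.exp 3 ≤ Real.exp (Real.exp 2) := Real.exp_le_exp.mpr h3
        have h5 : Real.exp 3 = Real.exp 1 ^ 3 := by rw [← Real.exp_nat_mul]; norm_num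
        have h6 : (2.7 : ℝ) ^ 3 ≤ Real.exp 1 ^ 3 := by
          gcongr
          linarith [Real.exp_one_gt_d9]
        norm_num at h6 ⊢
        linarith
      · have := Nat.find_min hex (m := k - 1) (by omega)
        rw [show k - 1 + 1 = k by omega] at this
        linarith
    refine (fourier_combine N ν ?_ k ξ).trans ?_
    · filter_upwards [hall] with ω hω
      exact (summable_aux N (hN1 0) hN2 ω (h01 ω hω) 0).1
    · exact hF k (A k) (hA1 k) ξ hξ hk2 (hk1.trans (hNsq k))
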